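/- The Bott–Thurston cocycle satisfies the group 2-cocycle identity: for all orientation-preserving diffeomorphisms γ₁, γ₂, γ₃ of the circle, B(γ₁, γ₂) + B(γ₁∘γ₂, γ₃) = B(γ₂, γ₃) + B(γ₁, γ₂∘γ₃), where B(γ₁,γ₂) = ∫_{S¹} log(γ₁'∘γ₂) d(log γ₂'). -/

import Mathlib

open Real intervalIntegral

/-- A lift to `ℝ` of an orientation-preserving diffeomorphism of the circle:
a smooth map commuting with translation by `2π` and with positive derivative. -/
def IsCircleDiffLift (f : ℝ → ℝ) : Prop :=
  ContDiff ℝ (⊤ : ℕ∞) f ∧ (∀ x, f (x + 2 * Real.pi) = f x + 2 * Real.pi) ∧ ∀ x, 0 < deriv f x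

/-- The real-valued Bott–Thurston cocycle
`B(γ₁,γ₂) = ∫_{S¹} log(γ₁'∘γ₂) d(log γ₂')`, expressed via lifts. -/
noncomputable def bottThurston (f g : ℝ → ℝ) : ℝ :=
  ∫ θ in (0:ℝ)..(2 * Real.pi),
    Real.log (deriv f (g θ)) * deriv (fun t => Real.log (deriv g t)) θ

/-- The logarithmic derivative of a lift is smooth. -/
lemma logDeriv_contDiff {f : ℝ → ℝ} (h : IsCircleDiffLift f) :
    ContDiff ℝ 1 (fun t => Real.log (deriv f t)) := by
  have h2 : ContDiff ℝ (1 + 1) f := h.1.of_le (by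
    have : ((2 : ℕ∞) : WithTop ℕ∞) ≤ ((⊤ : ℕ∞) : WithTop ℕ∞) := WithTop.coe_le_coe.2 le_top
    rw [one_add_one_eq_two]
    exact this)
  exact ((contDiff_succ_iff_deriv.1 h2).2.2).log (fun x => (h.2.2 x).ne')

/-- The derivative of a lift is periodic. -/
lemma deriv_periodic_lift {f : ℝ → ℝ} (h : IsCircleDiffLift f) :
    Function.Periodic (deriv f) (2 * Real.pi) := by
  intro x
  have e : (fun y => f (y + 2 * Real.pi)) = fun y => f y + 2 * Real.pi := funext h.2.1
  have := congrArg (fun u => deriv u x) e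
  simpa [deriv_comp_add_const] using this

lemma log_deriv_comp_lift {f g : ℝ → ℝ} (hf : IsCircleDiffLift f) (hg : IsCircleDiffLift g)
    (x : ℝ) : Real.log (deriv (f ∘ g) x)
      = Real.log (deriv f (g x)) + Real.log (deriv g x) := by
  rw [deriv_comp x (hf.1.differentiable (by simp) _) (hg.1.differentiable (by simp) _),
    Real.log_mul (hf.2.2 _).ne' (hg.2.2 _).ne']

/-- The Bott–Thurston cocycle satisfies the group 2-cocycle identity. -/
theorem bottThurston_cocycle (f₁ f₂ f₃ : ℝ → ℝ)
    (h₁ : IsCircleDiffLift f₁) (h₂ : IsCircleDiffLift f₂) (h₃ : IsCircleDiffLift f₃) :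
    bottThurston f₁ f₂ + bottThurston (f₁ ∘ f₂) f₃ =
      bottThurston f₂ f₃ + bottThurston f₁ (f₂ ∘ f₃) := by
  have c₁ := logDeriv_contDiff h₁
  have c₂ := logDeriv_contDiff h₂
  have c₃ := logDeriv_contDiff h₃
  have k₁ := c₁.continuous
  have k₂ := c₂.continuous
  have d₂ := c₂.continuous_deriv le_rfl
  have d₃ := c₃.continuous_deriv le_rfl
  have f2c := h₂.1.continuous
  have f3c := h₃.1.continuous
  have f3d : Continuous (deriv f₃) := h₃.1.continuous_deriv (by simp)
  have f3D : Differentiable ℝ f₃ := h₃.1.differentiable (by simp)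
  have a1 : Continuous fun θ => Real.log (deriv f₁ (f₂ (f₃ θ))) :=
    k₁.comp (f2c.comp f3c)
  have a2 : Continuous fun θ => Real.log (deriv f₂ (f₃ θ)) := k₂.comp f3c
  have e1 : bottThurston (f₁ ∘ f₂) f₃ =
      (∫ θ in (0:ℝ)..(2 * Real.pi), Real.log (deriv f₁ (f₂ (f₃ θ))) *
        deriv (fun t => Real.log (deriv f₃ t)) θ) + bottThurston f₂ f₃ := by
    unfold bottThurston
    rw [← intervalIntegral.integral_add]
    rotate_left
    · exact (a1.mul d₃).intervalIntegrable _ _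
    · exact (a2.mul d₃).intervalIntegrable _ _
    refine intervalIntegral.integral_congr fun θ _ => ?_
    simp only [log_deriv_comp_lift h₁ h₂]
    ring
  have e2 : bottThurston f₁ (f₂ ∘ f₃) =
      (∫ θ in (0:ℝ)..(2 * Real.pi), Real.log (deriv f₁ (f₂ (f₃ θ))) *
        deriv (fun t => Real.log (deriv f₂ t)) (f₃ θ) * deriv f₃ θ) +
      (∫ θ in (0:ℝ)..(2 * Real.pi), Real.log (deriv f₁ (f₂ (f₃ θ))) *
        deriv (fun t => Real.log (deriv f₃ t)) θ) := by
    unfold bottThurston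
    rw [← intervalIntegral.integral_add]
    rotate_left
    · exact ((a1.mul (d₂.comp f3c)).mul f3d).intervalIntegrable _ _
    · exact (a1.mul d₃).intervalIntegrable _ _
    refine intervalIntegral.integral_congr fun θ _ => ?_
    have hd : deriv (fun t => Real.log (deriv (f₂ ∘ f₃) t)) θ =
        deriv (fun t => Real.log (deriv f₂ t)) (f₃ θ) * deriv f₃ θ +
        deriv (fun t => Real.log (deriv f₃ t)) θ := by
      have e : (fun t => Real.log (deriv (f₂ ∘ f₃) t)) =
          fun t => Real.log (deriv f₂ (f₃ t)) + Real.log (deriv f₃ t) :=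
        funext (log_deriv_comp_lift h₂ h₃)
      rw [e]
      have x2 := ((c₂.differentiable one_ne_zero) (f₃ θ)).hasDerivAt
      have x3 := ((c₃.differentiable one_ne_zero) θ).hasDerivAt
      exact ((x2.comp θ (f3D θ).hasDerivAt).add x3).deriv
    simp only [hd, Function.comp_apply]
    ring
  have e3 : (∫ θ in (0:ℝ)..(2 * Real.pi), Real.log (deriv f₁ (f₂ (f₃ θ))) *
        deriv (fun t => Real.log (deriv f₂ t)) (f₃ θ) * deriv f₃ θ) = bottThurston f₁ f₂ := by
    have sub := intervalIntegral.integral_comp_mul_deriv (a := 0) (b := 2 * Real.pi)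
      (f := f₃) (f' := deriv f₃)
      (g := fun y => Real.log (deriv f₁ (f₂ y)) * deriv (fun t => Real.log (deriv f₂ t)) y)
      (fun x _ => (f3D x).hasDerivAt) f3d.continuousOn ((k₁.comp f2c).mul d₂)
    have per : Function.Periodic (fun y => Real.log (deriv f₁ (f₂ y)) *
        deriv (fun t => Real.log (deriv f₂ t)) y) (2 * Real.pi) := by
      intro y
      have q : deriv (fun t => Real.log (deriv f₂ t)) (y + 2 * Real.pi) =
          deriv (fun t => Real.log (deriv f₂ t)) y := by
        rw [← deriv_comp_add_const]
        congr 1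
        funext t
        rw [deriv_periodic_lift h₂ t]
      simp only [q, h₂.2.1, deriv_periodic_lift h₁ _]
    have p := per.intervalIntegral_add_eq (f₃ 0) 0
    have z := h₃.2.1 0
    rw [zero_add] at z p
    rw [← z] at p
    exact sub.trans p
  rw [e1, e2, e3]
  ring
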